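/- Let p be prime and let ℤ_p act freely by linear isometries on spheres S^n and S^m with n > m. Then there is no ℤ_p-equivariant continuous map from S^n to S^m. -/

import Mathlib

open Metric

namespace BU

/-- Augmented ordered chains: finitely supported functions on lists. -/
abbrev Ch (R X : Type) [CommRing R] := List X →₀ R

section algebra
variable {R X Y : Type} [CommRing R]

noncomputable def cone (R : Type) [CommRing R] (x : X) : Ch R X →ₗ[R] Ch R X :=
  Finsupp.lmapDomain R R (List.cons x)

noncomputable def bdL (R : Type) [CommRing R] : List X → Ch R X
  | [] => 0
  | x :: l => Finsupp.single l 1 - cone R x (bdL R l)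

noncomputable def bd : Ch R X →ₗ[R] Ch R X := Finsupp.linearCombination R (bdL R)

noncomputable def push (f : X → Y) : Ch R X →ₗ[R] Ch R Y :=
  Finsupp.lmapDomain R R (List.map f)

@[simp] lemma cone_single (x : X) (l : List X) (c : R) :
    cone R x (Finsupp.single l c) = Finsupp.single (x :: l) c := by
  simp [cone]

@[simp] lemma push_single (f : X → Y) (l : List X) (c : R) :
    push f (Finsupp.single l c) = Finsupp.single (l.map f) c := by
  simp [push]

@[simp] lemma bd_single (l : List X) (c : R) :
    bd (Finsupp.single l c) = c • bdL R l := by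
  simp [bd]

lemma bd_cone (x : X) (z : Ch R X) : bd (cone R x z) = z - cone R x (bd z) := by
  induction z using Finsupp.induction_linear with
  | zero => simp
  | add f g hf hg => simp only [map_add, hf, hg]; abel
  | single l c =>
    simp [bdL, smul_sub]

lemma bd_bd (z : Ch R X) : bd (bd z) = 0 := by
  induction z using Finsupp.induction_linear with
  | zero => simp
  | add f g hf hg => simp only [map_add, hf, hg, add_zero]
  | single l c =>
    simp only [bd_single, map_smul]
    suffices bd (bdL R l) = 0 by rw [this, smul_zero]
    induction l with
    | nil => simp [bdL]
    | cons x l ih => simp [bdL, bd_cone, ih]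

lemma push_cone (f : X → Y) (x : X) (z : Ch R X) :
    push f (cone R x z) = cone R (f x) (push f z) := by
  induction z using Finsupp.induction_linear with
  | zero => simp
  | add f g hf hg => simp only [map_add, hf, hg]
  | single l c => simp

lemma bd_push (f : X → Y) (z : Ch R X) : bd (push f z) = push f (bd z) := by
  induction z using Finsupp.induction_linear with
  | zero => simp
  | add f g hf hg => simp only [map_add, hf, hg]
  | single l c =>
    simp only [bd_single, push_single, map_smul]
    congr 1
    induction l with
    | nil => simp [bdL]
    | cons x l ih => simp [bdL, push_cone, ← ih]

/-- extension of equalities -/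
lemma ext_supported {N : Type} [AddCommGroup N] [Module R N] (P : Set (List X))
    (A B : Ch R X →ₗ[R] N) (h : ∀ l ∈ P, A (Finsupp.single l 1) = B (Finsupp.single l 1))
    {z : Ch R X} (hz : z ∈ Finsupp.supported R R P) : A z = B z := by
  rw [Finsupp.supported_eq_span_single] at hz
  induction hz using Submodule.span_induction with
  | mem x hx => obtain ⟨l, hl, rfl⟩ := hx; exact h l hl
  | zero => simp
  | add x y _ _ hx hy => simp [hx, hy]
  | smul a x _ hx => simp [hx]

lemma map_supported {N : Type} [AddCommGroup N] [Module R N] (P : Set (List X))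
    (A : Ch R X →ₗ[R] N) (Q : Submodule R N) (h : ∀ l ∈ P, A (Finsupp.single l 1) ∈ Q)
    {z : Ch R X} (hz : z ∈ Finsupp.supported R R P) : A z ∈ Q := by
  rw [Finsupp.supported_eq_span_single] at hz
  induction hz using Submodule.span_induction with
  | mem x hx => obtain ⟨l, hl, rfl⟩ := hx; exact h l hl
  | zero => simp
  | add x y _ _ hx hy => simpa using Q.add_mem hx hy
  | smul a x _ hx => simpa using Q.smul_mem a hx

lemma cone_supported (x : X) {P Q : Set (List X)} (h : ∀ l ∈ P, x :: l ∈ Q) {z : Ch R X}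
    (hz : z ∈ Finsupp.supported R R P) : cone R x z ∈ Finsupp.supported R R Q := by
  refine map_supported P _ _ (fun l hl => ?_) hz
  simpa using Finsupp.single_mem_supported R (1 : R) (h l hl)

lemma push_supported (f : X → Y) {P : Set (List X)} {Q : Set (List Y)}
    (h : ∀ l ∈ P, l.map f ∈ Q) {z : Ch R X}
    (hz : z ∈ Finsupp.supported R R P) : push f z ∈ Finsupp.supported R R Q := by
  refine map_supported P _ _ (fun l hl => ?_) hz
  simpa using Finsupp.single_mem_supported R (1 : R) (h l hl)

lemma bdL_supported (l : List X) :
    bdL R l ∈ Finsupp.supported R R {l' | l'.Sublist l ∧ l'.length + 1 = l.length} := by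
  induction l with
  | nil => simp [bdL]
  | cons x l ih =>
    refine Submodule.sub_mem _ (Finsupp.single_mem_supported R (1 : R) (by simp)) ?_
    refine cone_supported x ?_ ih
    rintro l' ⟨h1, h2⟩
    exact ⟨by simpa using h1, by simpa using h2⟩

/-- subdivision -/
noncomputable def sd (β : List X → Y) : ℕ → (Ch R X →ₗ[R] Ch R Y)
  | 0 => Finsupp.linearCombination R (fun _ => Finsupp.single [] 1)
  | k + 1 => Finsupp.linearCombination R (fun l => cone R (β l) (sd β k (bdL R l)))

lemma sd_zero_single (β : List X → Y) (l : List X) :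
    sd β 0 (Finsupp.single l (1 : R)) = Finsupp.single [] 1 := by simp [sd]

lemma sd_succ_single (β : List X → Y) (k : ℕ) (l : List X) :
    sd β (k + 1) (Finsupp.single l (1 : R)) = cone R (β l) (sd β k (bdL R l)) := by simp [sd]

lemma bd_sd (β : List X → Y) (k : ℕ) {z : Ch R X}
    (hz : z ∈ Finsupp.supported R R {l : List X | l.length = k + 1}) :
    bd (sd β (k + 1) z) = sd β k (bd z) := by
  induction k generalizing z with
  | zero =>
    refine ext_supported _ (bd ∘ₗ sd β 1) (sd β 0 ∘ₗ bd) ?_ hz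
    intro l hl
    obtain ⟨x, rfl⟩ := List.length_eq_one_iff.1 hl
    simp [sd_succ_single, bdL, sd_zero_single]
  | succ k ih =>
    refine ext_supported _ (bd ∘ₗ sd β (k + 2)) (sd β (k + 1) ∘ₗ bd) ?_ hz
    intro l hl
    simp only [LinearMap.comp_apply]
    rw [sd_succ_single, bd_cone, ih, ]
    · have : bd (bdL R l) = 0 := by simpa using bd_bd (Finsupp.single l (1 : R))
      simp [this]
    · refine Finsupp.supported_mono ?_ (bdL_supported l)
      rintro l' ⟨-, h⟩
      simp only [Set.mem_ofPred_eq] at hl ⊢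
      omega

lemma sd_push {X' Y' : Type} (β : List X → Y) (β' : List X' → Y') (f : X → X') (g : Y → Y')
    (h : ∀ l, l ≠ [] → β' (l.map f) = g (β l)) (k : ℕ) (z : Ch R X) :
    sd β' k (push f z) = push g (sd β k z) := by
  induction k generalizing z with
  | zero =>
    refine ext_supported (N := Ch R Y') Set.univ (sd β' 0 ∘ₗ push f) (push g ∘ₗ sd β 0) ?_ (by simp)
    intro l _
    simp [sd_zero_single]
  | succ k ih =>
    refine ext_supported (N := Ch R Y') Set.univ (sd β' (k+1) ∘ₗ push f) (push g ∘ₗ sd β (k+1)) ?_ (by simp)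
    intro l _
    have := bd_push f (Finsupp.single l (1 : R))
    simp only [push_single, bd_single, one_smul] at this
    rcases l with _ | ⟨a, l⟩
    · simp [sd_succ_single, bdL]
    · have h' := h (a :: l) (by simp)
      simp only [LinearMap.comp_apply, push_single, sd_succ_single, push_cone, this, ih, h']

/-- general support principle for `sd`. `Q l L`: output list `L` allowed for input list `l` -/
lemma sd_supported (β : List X → Y) (Q : List X → List Y → Prop)
    (h0 : ∀ l, Q l [])
    (h1 : ∀ l l' L, l'.Sublist l → l'.length + 1 = l.length → Q l' L → Q l (β l :: L))
    (k : ℕ) (l : List X) (hl : l.length = k) :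
    sd β k (Finsupp.single l (1 : R)) ∈
      Finsupp.supported R R {L | L.length = k ∧ Q l L} := by
  induction k generalizing l with
  | zero =>
    rw [sd_zero_single]
    exact Finsupp.single_mem_supported R (1 : R) ⟨rfl, h0 l⟩
  | succ k ih =>
    rw [sd_succ_single]
    refine cone_supported (P := {L | L.length = k ∧ ∃ l', l'.Sublist l ∧ l'.length + 1 = l.length ∧ Q l' L}) _ ?_ ?_
    · rintro L ⟨hL, l', h2, h3, h4⟩
      exact ⟨by simp [hL], h1 l l' L h2 h3 h4⟩
    · refine map_supported _ _ _ ?_ (bdL_supported l)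
      rintro l' ⟨h2, h3⟩
      refine Finsupp.supported_mono ?_ (ih l' (by omega))
      rintro L ⟨h4, h5⟩
      exact ⟨h4, l', h2, h3, h5⟩

/-- norm / difference operators -/
noncomputable def sop (p : ℕ) (t : X → X) (k : ℕ) : Ch R X →ₗ[R] Ch R X :=
  if Even k then ∑ j ∈ Finset.range p, push (t^[j]) else push t - LinearMap.id

lemma sop_add_two (p : ℕ) (t : X → X) (k : ℕ) :
    (sop p t (k + 2) : Ch R X →ₗ[R] Ch R X) = sop p t k := by
  simp [sop, Nat.even_add]

lemma push_push {Z : Type} (f : X → Y) (g : Y → Z) (z : Ch R X) :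
    push g (push f z) = push (g ∘ f) z := by
  induction z using Finsupp.induction_linear with
  | zero => simp
  | add f g hf hg => simp only [map_add, hf, hg]
  | single l c => simp

lemma push_id (z : Ch R X) : push id z = z := by
  induction z using Finsupp.induction_linear with
  | zero => simp
  | add f g hf hg => simp only [map_add, hf, hg]
  | single l c => simp

lemma sop_sop (p : ℕ) (t : X → X) (ht : t^[p] = id) (k : ℕ) (z : Ch R X) :
    sop p t (k + 1) (sop p t k z) = 0 := by
  have key : ∑ j ∈ Finset.range p, (push (t^[j+1]) z - push (t^[j]) z) = 0 := by
    rw [Finset.sum_range_sub (fun j => push (t^[j]) z), ht]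
    simp
  by_cases hk : Even k
  · have : ¬ Even (k + 1) := by rwa [Nat.even_add_one, not_not]
    simp only [sop, hk, this, if_true, if_false]
    simp only [LinearMap.sub_apply, LinearMap.sum_apply, map_sum, LinearMap.id_apply, push_push]
    rw [← key]
    refine Finset.sum_congr rfl fun j _ => ?_
    rw [Function.iterate_succ']
  · have : Even (k + 1) := by rwa [Nat.even_add_one]
    simp only [sop, hk, this, if_true, if_false]
    simp only [LinearMap.sub_apply, LinearMap.sum_apply, map_sub, LinearMap.id_apply, push_push]
    rw [← Finset.sum_sub_distrib, ← key]
    refine Finset.sum_congr rfl fun j _ => ?_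
    rw [Function.iterate_succ]

lemma bd_sop (p : ℕ) (t : X → X) (k : ℕ) (z : Ch R X) :
    bd (sop p t k z) = sop p t k (bd z) := by
  unfold sop
  split_ifs <;> simp [bd_push]

lemma sop_nil (p : ℕ) [CharP R p] (t : X → X) (k : ℕ) :
    sop p t k (Finsupp.single [] (1 : R)) = 0 := by
  unfold sop
  split_ifs
  · simp
  · simp

lemma sop_supported (p : ℕ) (t : X → X) (k : ℕ) {P : Set (List X)}
    (hP : ∀ l ∈ P, l.map t ∈ P) {z : Ch R X}
    (hz : z ∈ Finsupp.supported R R P) : sop p t k z ∈ Finsupp.supported R R P := by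
  have hj : ∀ j, push (t^[j]) z ∈ Finsupp.supported R R P := by
    intro j
    refine push_supported _ ?_ hz
    intro l hl
    induction j with
    | zero => simpa using hl
    | succ j ih =>
      rw [Function.iterate_succ', ← List.map_map]; exact hP _ ih
  unfold sop
  split_ifs
  · simp only [LinearMap.sum_apply]
    exact Submodule.sum_mem _ fun j _ => hj j
  · exact Submodule.sub_mem _ (hj 1) hz

/-- intertwining, on supported chains -/
lemma sop_comm (p : ℕ) (t : X → X) (t' : Y → Y) (k : ℕ) (A : Ch R X →ₗ[R] Ch R Y)
    (P : Set (List X)) (hP : ∀ l ∈ P, l.map t ∈ P)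
    (hA : ∀ z ∈ Finsupp.supported R R P, A (push t z) = push t' (A z)) {z : Ch R X}
    (hz : z ∈ Finsupp.supported R R P) :
    A (sop p t k z) = sop p t' k (A z) := by
  have hj : ∀ j, push (t^[j]) z ∈ Finsupp.supported R R P ∧ 
      A (push (t^[j]) z) = push (t'^[j]) (A z) := by
    intro j
    induction j with
    | zero => simp [push_id, hz]
    | succ j ih =>
      rw [Function.iterate_succ', ← push_push, Function.iterate_succ', ← push_push, ← ih.2]
      exact ⟨push_supported _ hP ih.1, hA _ ih.1⟩
  unfold sop
  split_ifs
  · simp [(hj _).2]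
  · simp [hA z hz]

end algebra
end BU

namespace BU

inductive Deg {X : Type} : List X → Prop
  | here (x : X) (l : List X) : Deg (x :: x :: l)
  | cons (x : X) {l : List X} : Deg l → Deg (x :: l)

lemma Deg.map {X Y : Type} (f : X → Y) {l : List X} (h : Deg l) : Deg (l.map f) := by
  induction h with
  | here x l => exact Deg.here _ _
  | cons x _ ih => exact Deg.cons _ ih

lemma bdL_deg {R X : Type} [CommRing R] {l : List X} (h : Deg l) :
    bdL R l ∈ Finsupp.supported R R {l : List X | Deg l} := by
  induction h with
  | here x l =>
    have : bdL R (x :: x :: l) = cone R x (cone R x (bdL R l)) := by simp [bdL]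
    rw [this]
    refine cone_supported (P := Set.univ.image (List.cons x)) x ?_
      (cone_supported (P := Set.univ) x ?_ (by simp))
    · rintro _ ⟨l, -, rfl⟩; exact Deg.here _ _
    · intro l _; exact ⟨l, trivial, rfl⟩
  | cons x h ih =>
    refine Submodule.sub_mem _ (Finsupp.single_mem_supported R (1 : R) h) ?_
    exact cone_supported x (fun l hl => Deg.cons x hl) ih

section
variable (p : ℕ) [hp : Fact p.Prime]

abbrev Co := Ch (ZMod p) (ZMod p) →ₗ[ZMod p] ZMod p

noncomputable def hop (k : ℕ) (c : Co p) : Co p :=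
  if Even k then
    Finsupp.linearCombination (ZMod p)
      (fun l => if l.headD 0 = 0 then c (Finsupp.single l 1) else 0)
  else
    Finsupp.linearCombination (ZMod p)
      (fun l => ∑ j ∈ Finset.range (l.headD 0).val,
        c (Finsupp.single (l.map (· + ((j : ZMod p) - l.headD 0))) 1))

lemma iter_add (j : ℕ) : (fun a : ZMod p => a + 1)^[j] = fun a => a + (j : ZMod p) := by
  induction j with
  | zero => ext a; simp
  | succ j ih => rw [Function.iterate_succ', ih]; ext a; simp [add_assoc]

lemma hop_spec (k : ℕ) (c : Co p) (hc0 : c (Finsupp.single [] 1) = 0)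
    (hc : c ∘ₗ sop p (fun a => a + 1) (k + 1) = 0) :
    hop p k c ∘ₗ sop p (fun a => a + 1) k = c := by
  refine LinearMap.ext fun z => ?_
  refine ext_supported Set.univ (hop p k c ∘ₗ sop p (fun a => a + 1) k) c ?_ (by simp)
  intro l _
  rcases l with _ | ⟨a, l⟩
  · simp only [LinearMap.comp_apply, sop_nil, map_zero, hc0]
  set L := a :: l with hL
  by_cases hk : Even k
  · have hk' : ¬ Even (k + 1) := by rwa [Nat.even_add_one, not_not]
    have hinv : ∀ L : List (ZMod p), c (Finsupp.single (L.map (fun a => a + 1)) 1) =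
        c (Finsupp.single L 1) := by
      intro L
      have := LinearMap.congr_fun hc (Finsupp.single L 1)
      simpa [sop, hk', sub_eq_zero] using this
    have hinv' : ∀ j : ℕ, c (Finsupp.single (L.map (fun a => a + (j : ZMod p))) 1) =
        c (Finsupp.single L 1) := by
      intro j
      rw [← iter_add]
      induction j with
      | zero => simp
      | succ j ih =>
        rw [Function.iterate_succ', ← List.map_map, hinv, ih]
    simp only [LinearMap.comp_apply, sop, hk, if_true, LinearMap.sum_apply, push_single, map_sum,
      iter_add, hop, Finsupp.linearCombination_single, one_smul, hinv']
    rw [Finset.sum_eq_single (-a).val]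
    · simp [hL]
    · intro j hj hne
      rw [if_neg]
      simp only [hL, List.map_cons, List.headD_cons]
      intro h0
      apply hne
      have : (j : ZMod p) = -a := by linear_combination h0
      rw [← this, ZMod.val_natCast, Nat.mod_eq_of_lt (Finset.mem_range.1 hj)]
    · intro h
      exact absurd (Finset.mem_range.2 (ZMod.val_lt _)) h
  · have hk' : Even (k + 1) := by rwa [Nat.even_add_one]
    have hG : ∑ j ∈ Finset.range p,
        c (Finsupp.single (L.map (· + ((j : ZMod p) - a))) 1) = 0 := by
      have := LinearMap.congr_fun hc (Finsupp.single (L.map (fun x => x - a)) 1)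
      simp only [LinearMap.comp_apply, sop, hk', if_true, LinearMap.sum_apply, push_single,
        map_sum, iter_add, LinearMap.zero_apply, List.map_map] at this
      rw [← this]
      refine Finset.sum_congr rfl fun j _ => ?_
      congr 3
      ext x
      simp; ring
    simp only [LinearMap.comp_apply, sop, hk, if_false, LinearMap.sub_apply, push_single, map_sub,
      hop, Finsupp.linearCombination_single, one_smul, LinearMap.id_apply]
    have e1 : (List.map (fun a => a + 1) L).headD 0 = a + 1 := by simp [hL]
    have e2 : L.headD 0 = a := by simp [hL]
    rw [e1, e2]
    have e3 : ∀ j : ℕ, List.map (fun x => x + ((j : ZMod p) - (a + 1))) (L.map (fun a => a + 1))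
        = L.map (· + ((j : ZMod p) - a)) := by
      intro j
      rw [List.map_map]
      congr 1
      ext x
      simp only [Function.comp_apply]
      ring
    simp only [e3]
    have e4 : c (Finsupp.single (L.map (· + ((a.val : ZMod p) - a))) 1) =
        c (Finsupp.single L 1) := by simp
    rw [← e4]
    by_cases hlt : a.val + 1 < p
    · have : (a + 1).val = a.val + 1 := by
        have : Fact (1 < p) := ⟨hp.out.one_lt⟩
        rw [ZMod.val_add_of_lt] <;> simp [ZMod.val_one, hlt]
      rw [this, Finset.sum_range_succ]
      ring
    · have hle : a.val + 1 = p := by have := ZMod.val_lt a; omega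
      have h0 : a + 1 = 0 := by
        have : ((a.val + 1 : ℕ) : ZMod p) = 0 := by rw [hle]; simp
        simpa using this
      have hr : Finset.range p = Finset.range (a.val + 1) := by rw [hle]
      rw [hr, Finset.sum_range_succ] at hG
      rw [h0]
      simp only [ZMod.val_zero, Finset.range_zero, Finset.sum_empty]
      linear_combination -hG

lemma hop_deg (k : ℕ) (c : Co p) (hc : ∀ l, Deg l → c (Finsupp.single l 1) = 0) :
    ∀ l, Deg l → hop p k c (Finsupp.single l 1) = 0 := by
  intro l hl
  unfold hop
  split_ifs
  · simp [hc l hl]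
  · simp only [Finsupp.linearCombination_single, one_smul]
    exact Finset.sum_eq_zero fun j _ => hc _ (hl.map _)

noncomputable def coch : ℕ → Co p
  | 0 => Finsupp.linearCombination (ZMod p) (fun l => if l = [] then 1 else 0)
  | k + 1 => hop p k (coch k ∘ₗ bd)

lemma coch_deg (k : ℕ) : ∀ l, Deg l → coch p k (Finsupp.single l 1) = 0 := by
  induction k with
  | zero =>
    intro l hl
    have : l ≠ [] := by rintro rfl; cases hl
    simp [coch, this]
  | succ k ih =>
    refine hop_deg p k _ fun l hl => ?_
    simp only [LinearMap.comp_apply, bd_single, one_smul]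
    have := map_supported {l | Deg l} (coch p k) ⊥ (by simpa using ih) (bdL_deg (R := ZMod p) hl)
    simpa using this

lemma coch_spec (k : ℕ) : coch p (k + 1) ∘ₗ sop p (fun a => a + 1) k = coch p k ∘ₗ bd := by
  have h0 : ∀ k, (coch p k ∘ₗ bd) (Finsupp.single [] 1) = 0 := by simp [bdL]
  induction k with
  | zero =>
    refine hop_spec p 0 _ (h0 0) ?_
    refine LinearMap.ext fun z => ?_
    refine ext_supported (N := ZMod p) Set.univ _ 0 ?_ (by simp)
    intro l _
    have key : ∀ l : List (ZMod p), coch p 0 (bdL (ZMod p) l) = if l.length = 1 then 1 else 0 := by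
      intro l
      rcases l with _ | ⟨a, _ | ⟨b, l⟩⟩
      · simp [bdL]
      · simp [bdL, coch]
      · have : coch p 0 ∘ₗ cone (ZMod p) a = 0 := by
          refine LinearMap.ext fun z => ?_
          refine ext_supported (N := ZMod p) Set.univ _ 0 ?_ (by simp)
          intro l _
          simp [coch]
        have h2 := fun z => LinearMap.congr_fun this z
        simp only [LinearMap.comp_apply, LinearMap.zero_apply] at h2
        rw [bdL, map_sub, h2]
        simp [coch]
    simp [sop, key]
  | succ k ih =>
    refine hop_spec p (k + 1) _ (h0 (k + 1)) ?_
    rw [sop_add_two]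
    refine LinearMap.ext fun z => ?_
    simp only [LinearMap.comp_apply, bd_sop, LinearMap.zero_apply]
    have := LinearMap.congr_fun ih (bd z)
    simp only [LinearMap.comp_apply] at this
    rw [this, bd_bd, map_zero]

end

/-- A system of chains. -/
def Sys (p : ℕ) {X : Type} (t : X → X) (K : ℕ) (P : Set (List X)) (x : ℕ → Ch (ZMod p) X) : Prop :=
  bd (x 0) = Finsupp.single [] 1 ∧ (∀ k < K, bd (x (k + 1)) = sop p t k (x k)) ∧
  ∀ k ≤ K, x k ∈ Finsupp.supported (ZMod p) (ZMod p) (P ∩ {l | l.length = k + 1})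

/-- algebraic contradiction -/
lemma no_sys (p : ℕ) [hp : Fact p.Prime] (K : ℕ) (P : Set (List (ZMod p)))
    (x : ℕ → Ch (ZMod p) (ZMod p)) (hx : Sys p (fun a => a + 1) K P x)
    (hd : ∀ l ∈ P, l.length = K + 1 → Deg l) : False := by
  obtain ⟨h0, h1, h2⟩ := hx
  have h3 : ∀ k ≤ K, coch p (k + 1) (sop p (fun a => a + 1) k (x k)) = 1 := by
    intro k hk
    have hs := LinearMap.congr_fun (coch_spec p k) (x k)
    simp only [LinearMap.comp_apply] at hs
    induction k with
    | zero => rw [hs, h0]; simp [coch]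
    | succ k ih =>
      rw [hs, h1 k (by omega)]
      refine ih (by omega) ?_
      have := LinearMap.congr_fun (coch_spec p k) (x k)
      simpa only [LinearMap.comp_apply] using this
  have h4 : sop p (fun a => a + 1) K (x K) ∈ Finsupp.supported (ZMod p) (ZMod p) {l | Deg l} := by
    refine sop_supported p _ K (fun l hl => hl.map _) ?_
    refine Finsupp.supported_mono ?_ (h2 K le_rfl)
    rintro l ⟨hl, hl'⟩
    exact hd l hl hl'
  have h5 := map_supported {l | Deg l} (coch p (K + 1)) ⊥ (by simpa using coch_deg p (K + 1)) h4
  rw [Submodule.mem_bot, h3 K le_rfl] at h5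
  exact one_ne_zero h5

end BU

namespace BU

lemma Sys.sd {p : ℕ} {X Y : Type} {t : X → X} {K : ℕ} {P : Set (List X)} {x : ℕ → Ch (ZMod p) X}
    (hx : Sys p t K P x) (t' : Y → Y) (β : List X → Y) (hβ : ∀ l, l ≠ [] → β (l.map t) = t' (β l))
    (Q : List X → List Y → Prop) (h0 : ∀ l, Q l [])
    (h1 : ∀ l l' L, l'.Sublist l → l'.length + 1 = l.length → Q l' L → Q l (β l :: L))
    (P' : Set (List Y)) (hP' : ∀ l ∈ P, ∀ L, l.length ≤ K + 1 → Q l L → L ∈ P') :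
    Sys p t' K P' (fun k => BU.sd β (k + 1) (x k)) := by
  obtain ⟨e0, e1, e2⟩ := hx
  refine ⟨?_, ?_, ?_⟩
  · rw [bd_sd, e0, sd_zero_single]
    exact Finsupp.supported_mono (by rintro l ⟨_, h⟩; exact h) (e2 0 (Nat.zero_le _))
  · intro k hk
    rw [bd_sd, e1 k hk]
    · refine sop_comm p t t' k _ Set.univ (by simp) (fun z _ => ?_) (by simp)
      exact sd_push β β t t' hβ _ z
    · exact Finsupp.supported_mono (by rintro l ⟨_, h⟩; exact h) (e2 (k + 1) hk)
  · intro k hk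
    refine map_supported _ _ _ ?_ (e2 k hk)
    rintro l ⟨hl, hl'⟩
    refine Finsupp.supported_mono ?_ (sd_supported β Q h0 h1 (k + 1) l hl')
    rintro L ⟨hL, hL'⟩
    exact ⟨hP' l hl L (by rw [hl']; omega) hL', hL⟩

lemma Sys.push {p : ℕ} {X Y : Type} {t : X → X} {K : ℕ} {P : Set (List X)}
    {x : ℕ → Ch (ZMod p) X}
    (hx : Sys p t K P x) (t' : Y → Y) (f : X → Y) (P' : Set (List Y))
    (hP : ∀ l ∈ P, l.map t ∈ P) (hf : ∀ l ∈ P, ∀ x ∈ l, f (t x) = t' (f x))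
    (hP' : ∀ l ∈ P, l.map f ∈ P') :
    Sys p t' K P' (fun k => BU.push f (x k)) := by
  obtain ⟨e0, e1, e2⟩ := hx
  refine ⟨?_, ?_, ?_⟩
  · rw [bd_push, e0]; simp
  · intro k hk
    rw [bd_push, e1 k hk]
    refine sop_comm p t t' k _ P hP (fun z hz => ?_)
      (Finsupp.supported_mono (by rintro l ⟨h, _⟩; exact h) (e2 k hk.le))
    refine ext_supported P (BU.push f ∘ₗ BU.push t) (BU.push t' ∘ₗ BU.push f) ?_ hz
    intro l hl
    simp only [LinearMap.comp_apply, push_single, List.map_map]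
    congr 1
    exact List.map_congr_left (hf l hl)
  · intro k hk
    refine push_supported _ ?_ (e2 k hk)
    rintro l ⟨h, h'⟩
    exact ⟨hP' l h, by simpa using h'⟩

lemma Sys.mono {p : ℕ} {X : Type} {t : X → X} {K : ℕ} {P P' : Set (List X)}
    {x : ℕ → Ch (ZMod p) X} (hx : Sys p t K P x)
    (h : ∀ k ≤ K, ∀ l ∈ (x k).support, l ∈ P → l ∈ P') : Sys p t K P' x := by
  refine ⟨hx.1, hx.2.1, fun k hk => ?_⟩
  have := hx.2.2 k hk
  rw [Finsupp.mem_supported] at this ⊢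
  intro l hl
  exact ⟨h k hk l hl (this hl).1, (this hl).2⟩

set_option linter.unusedSectionVars false
section geom
variable {V : Type} [NormedAddCommGroup V] [InnerProductSpace ℝ V] [FiniteDimensional ℝ V]

def hull (l : List V) : Set V := convexHull ℝ {x | x ∈ l}

lemma zero_notMem_hull_cons (c : V) (l : List V) (hl : (0 : V) ∉ hull l)
    (hc : c ∉ Submodule.span ℝ {x | x ∈ l}) : (0 : V) ∉ hull (c :: l) := by
  have hset : {x | x ∈ c :: l} = insert c {x | x ∈ l} := by ext x; simp
  have hc0 : c ≠ 0 := by rintro rfl; exact hc (Submodule.zero_mem _)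
  rcases l with _ | ⟨b, l⟩
  · have : {x | x ∈ [c]} = {c} := by ext x; simp
    rw [hull, this, convexHull_singleton]
    simpa using hc0.symm
  rw [hull, hset, convexHull_insert ⟨b, by simp⟩, mem_convexJoin]
  rintro ⟨x, hx, y, hy, α, γ, hα, hγ, hαγ, h⟩
  rw [Set.mem_singleton_iff] at hx
  subst hx
  have hys : y ∈ Submodule.span ℝ {x | x ∈ b :: l} :=
    convexHull_min Submodule.subset_span (Submodule.convex _) hy
  by_cases h0 : α = 0
  · subst h0
    have : γ = 1 := by linarith
    subst this
    apply hl
    have : y = 0 := by simpa using h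
    rw [← this]; exact hy
  · apply hc
    have : x = (-(α⁻¹ * γ)) • y := by
      have h2 : α • x = -(γ • y) := eq_neg_of_add_eq_zero_left h
      calc x = α⁻¹ • (α • x) := by rw [smul_smul, inv_mul_cancel₀ h0, one_smul]
        _ = _ := by rw [h2, smul_neg, smul_smul, neg_smul]
    rw [this]
    exact Submodule.smul_mem _ _ hys

lemma hull_map (T : V →ₗ[ℝ] V) (l : List V) : hull (l.map T) = T '' hull l := by
  rw [hull, hull, LinearMap.image_convexHull]
  congr 1
  ext x
  simp

lemma exists_avoid (s : Finset (List V)) (h : ∀ l ∈ s, l.length < Module.finrank ℝ V) :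
    ∃ c : V, ∀ l ∈ s, c ∉ Submodule.span ℝ {x | x ∈ l} := by
  classical
  have := Subspace.biUnion_ne_univ_of_top_notMem (k := ℝ) (E := V)
    (s := s.image (fun l : List V => Submodule.span ℝ {x | x ∈ l})) (by
      intro ht
      rw [Finset.mem_image] at ht
      obtain ⟨l, hl, hlt⟩ := ht
      have h1 := finrank_span_finset_le_card (R := ℝ) l.toFinset
      have h2 : ((l.toFinset : Finset V) : Set V) = {x | x ∈ l} := by ext; simp
      rw [h2, Set.finrank, hlt, finrank_top] at h1
      have := h l hl
      have := List.toFinset_card_le l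
      omega)
  rw [Set.ne_univ_iff_exists_notMem] at this
  obtain ⟨c, hc⟩ := this
  refine ⟨c, fun l hl hcl => hc ?_⟩
  simp only [Finset.mem_image, Set.mem_iUnion]
  exact ⟨_, ⟨l, hl, rfl⟩, hcl⟩

lemma exists_sys (p : ℕ) [Fact p.Prime] (T : V →ₗ[ℝ] V) (hT : (T : V → V)^[p] = id) (K : ℕ)
    (hK : K < Module.finrank ℝ V) :
    ∃ x : ℕ → Ch (ZMod p) V, Sys p T K {l | (0 : V) ∉ hull l} x := by
  have hinj : Function.Injective T := by
    have hp := (Fact.out : p.Prime).pos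
    obtain ⟨q, rfl⟩ : ∃ q, p = q + 1 := ⟨p - 1, by omega⟩
    rw [Function.iterate_succ] at hT
    exact Function.Injective.of_comp (f := T^[q]) (by rw [hT]; exact Function.injective_id)
  induction K with
  | zero =>
    have : Nontrivial V := Module.finrank_pos_iff.1 hK
    obtain ⟨v, hv⟩ := exists_ne (0 : V)
    refine ⟨fun _ => Finsupp.single [v] 1, by simp [bdL], by simp, ?_⟩
    intro k hk
    obtain rfl : k = 0 := by omega
    refine Finsupp.single_mem_supported _ _ ⟨?_, by simp⟩
    apply zero_notMem_hull_cons
    · simp [hull]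
    · simpa using hv
  | succ K ih =>
    obtain ⟨x, e0, e1, e2⟩ := ih (by omega)
    set z := sop p T K (x K) with hz
    have hzs : z ∈ Finsupp.supported (ZMod p) (ZMod p)
        ({l | (0 : V) ∉ hull l} ∩ {l | l.length = K + 1}) := by
      refine sop_supported p _ K ?_ (e2 K le_rfl)
      rintro l ⟨h1, h2⟩
      refine ⟨?_, by simpa using h2⟩
      simp only [Set.mem_ofPred_eq] at h1 ⊢
      rw [hull_map]
      rintro ⟨y, hy, hy0⟩
      exact h1 (by rwa [(map_eq_zero_iff T hinj).1 hy0] at hy)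
    rw [Finsupp.mem_supported] at hzs
    obtain ⟨c, hc⟩ := exists_avoid z.support (by
      intro l hl
      have : l.length = K + 1 := (hzs hl).2
      omega)
    have hbz : cone (ZMod p) c (bd z) = 0 := by
      rw [hz, bd_sop]
      rcases K with _ | K
      · rw [e0, sop_nil, map_zero]
      · rw [e1 K (by omega), sop_sop p _ hT, map_zero]
    refine ⟨Function.update x (K + 1) (cone _ c z), ?_, ?_, ?_⟩
    · rw [Function.update_of_ne (by omega), e0]
    · intro k hk
      rw [Function.update_of_ne (a := k) (by omega)]
      rcases Nat.lt_succ_iff_lt_or_eq.1 hk with h | rfl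
      · rw [Function.update_of_ne (by omega), e1 k h]
      · rw [Function.update_self, bd_cone, hbz, sub_zero]
    · intro k hk
      rcases Nat.le_succ_iff.1 hk with h | rfl
      · rw [Function.update_of_ne (by omega)]; exact e2 k h
      · rw [Function.update_self]
        refine cone_supported (P := z.support) c ?_ (by rw [Finsupp.mem_supported])
        intro l hl
        have h1 := hzs hl
        refine ⟨zero_notMem_hull_cons c l h1.1 (hc l hl), ?_⟩
        have : l.length = K + 1 := h1.2
        simp [this]

/-- centroid -/
noncomputable def cen (l : List V) : V := (l.length : ℝ)⁻¹ • l.sum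

lemma cen_map (T : V →ₗ[ℝ] V) (l : List V) : cen (l.map T) = T (cen l) := by
  simp [cen, map_list_sum]

lemma norm_sum_sub_le (l : List V) (v : V) (D : ℝ) (h : ∀ w ∈ l, dist w v ≤ D) :
    ‖l.sum - (l.length : ℝ) • v‖ ≤ l.length * D := by
  induction l with
  | nil => simp
  | cons a l ih =>
    have h1 := ih (fun w hw => h w (by simp [hw]))
    have h2 := h a (by simp)
    rw [dist_eq_norm] at h2
    have : (a :: l).sum - ((a :: l).length : ℝ) • v = (a - v) + (l.sum - (l.length : ℝ) • v) := by
      simp [add_smul]; abel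
    rw [this]
    refine (norm_add_le _ _).trans ?_
    push_cast [List.length_cons]
    linarith

lemma norm_sum_sub_le' (l : List V) (v : V) (hv : v ∈ l) (D : ℝ) (h : ∀ w ∈ l, dist w v ≤ D) :
    ‖l.sum - (l.length : ℝ) • v‖ ≤ (l.length - 1) * D := by
  obtain ⟨l1, l2, rfl⟩ := List.append_of_mem hv
  have h1 := norm_sum_sub_le l1 v D (fun w hw => h w (by simp [hw]))
  have h2 := norm_sum_sub_le l2 v D (fun w hw => h w (by simp [hw]))
  have : (l1 ++ v :: l2).sum - ((l1 ++ v :: l2).length : ℝ) • v =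
      (l1.sum - (l1.length : ℝ) • v) + (l2.sum - (l2.length : ℝ) • v) := by
    simp [add_smul]; abel
  rw [this]
  refine (norm_add_le _ _).trans ?_
  push_cast [List.length_append, List.length_cons]
  linarith

lemma dist_cen_le (l : List V) (v : V) (hv : v ∈ l) (D : ℝ) (hD : 0 ≤ D)
    (h : ∀ w ∈ l, dist w v ≤ D) (N : ℕ) (hN : l.length ≤ N) :
    dist v (cen l) ≤ (1 - (N : ℝ)⁻¹) * D := by
  have hpos : 0 < (l.length : ℝ) := by exact_mod_cast List.length_pos_of_mem hv
  have h1 := norm_sum_sub_le' l v hv D h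
  have h2 : cen l - v = (l.length : ℝ)⁻¹ • (l.sum - (l.length : ℝ) • v) := by
    rw [smul_sub, smul_smul, inv_mul_cancel₀ hpos.ne', one_smul, cen]
  rw [dist_comm, dist_eq_norm, h2, norm_smul, Real.norm_of_nonneg (by positivity)]
  calc (l.length : ℝ)⁻¹ * ‖l.sum - (l.length : ℝ) • v‖
      ≤ (l.length : ℝ)⁻¹ * ((l.length - 1) * D) := by gcongr
    _ = (1 - (l.length : ℝ)⁻¹) * D := by field_simp
    _ ≤ _ := by
      have : (l.length : ℝ) ≤ N := by exact_mod_cast hN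
      gcongr

lemma cen_mem_hull (l : List V) (hl : l ≠ []) : cen l ∈ hull l := by
  have hpos : 0 < (l.length : ℝ) := by exact_mod_cast List.length_pos_iff.2 hl
  have h := (convex_convexHull ℝ {x | x ∈ l}).sum_mem (t := (Finset.univ : Finset (Fin l.length)))
    (w := fun _ => (l.length : ℝ)⁻¹) (z := fun i => l.get i) (fun i _ => by positivity)
    (by simp [hpos.ne']) (fun i _ => subset_convexHull ℝ _ (by simp))
  rw [← Finset.smul_sum] at h
  have e : ∑ i, l.get i = l.sum := by
    rw [← List.sum_ofFn, List.ofFn_get]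
  rw [e] at h
  exact h

lemma Sys.shrink {p : ℕ} {T : V →ₗ[ℝ] V} {K : ℕ} {S : Set (Set V)} (hS : ∀ C ∈ S, Convex ℝ C)
    {D : ℝ} (hD : 0 ≤ D) {x : ℕ → Ch (ZMod p) V}
    (hx : Sys p T K {l | (∃ C ∈ S, ∀ x ∈ l, x ∈ C) ∧ ∀ x ∈ l, ∀ y ∈ l, dist x y ≤ D} x) :
    ∃ x' : ℕ → Ch (ZMod p) V, Sys p T K {l | (∃ C ∈ S, ∀ x ∈ l, x ∈ C) ∧
      ∀ x ∈ l, ∀ y ∈ l, dist x y ≤ (1 - ((K + 1 : ℕ) : ℝ)⁻¹) * D} x' := by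
  have hq : 0 ≤ (1 - ((K + 1 : ℕ) : ℝ)⁻¹) * D := by
    refine mul_nonneg (sub_nonneg.2 (inv_le_one_of_one_le₀ (by simp))) hD
  refine ⟨_, hx.sd T cen (fun l _ => cen_map T l) (fun l L => (∀ x ∈ L, x ∈ hull l) ∧
    (l.length ≤ K + 1 → (∀ x ∈ l, ∀ y ∈ l, dist x y ≤ D) → 
      ∀ x ∈ L, ∀ y ∈ L, dist x y ≤ (1 - ((K + 1 : ℕ) : ℝ)⁻¹) * D)) (by simp) ?_ _ ?_⟩
  · rintro l l' L hsub hlen ⟨h1, h2⟩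
    have hne : l ≠ [] := by rintro rfl; simp at hlen
    have hh : hull l' ⊆ hull l := convexHull_mono fun x hx => hsub.subset hx
    refine ⟨?_, ?_⟩
    · intro x hx
      rcases List.mem_cons.1 hx with rfl | hx
      · exact cen_mem_hull l hne
      · exact hh (h1 x hx)
    · intro hK hd
      have h3 := h2 (by omega) (fun x hx y hy => hd x (hsub.subset hx) y (hsub.subset hy))
      have h4 : ∀ y ∈ L, dist y (cen l) ≤ (1 - ((K + 1 : ℕ) : ℝ)⁻¹) * D := by
        intro y hy
        have : hull l ⊆ closedBall (cen l) ((1 - ((K + 1 : ℕ) : ℝ)⁻¹) * D) := by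
          refine convexHull_min ?_ (convex_closedBall _ _)
          intro v hv
          exact dist_cen_le l v hv D hD (fun w hw => hd w hw v hv) (K + 1) hK
        exact this (hh (h1 y hy))
      intro x hx y hy
      rcases List.mem_cons.1 hx with rfl | hx <;> rcases List.mem_cons.1 hy with rfl | hy
      · simpa using hq
      · rw [dist_comm]; exact h4 y hy
      · exact h4 x hx
      · exact h3 x hx y hy
  · rintro l ⟨⟨C, hC, hlC⟩, hd⟩ L hlen ⟨h1, h2⟩
    refine ⟨⟨C, hC, fun x hx => ?_⟩, h2 hlen hd⟩
    exact convexHull_min (fun y hy => hlC y hy) (hS C hC) (h1 x hx)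

lemma exists_small_sys (p : ℕ) [Fact p.Prime] (T : V →ₗ[ℝ] V) (hT : (T : V → V)^[p] = id) (K : ℕ)
    (hK : K < Module.finrank ℝ V) :
    ∃ C : Set V, IsCompact C ∧ (0 : V) ∉ C ∧ ∀ ε > 0, ∃ x : ℕ → Ch (ZMod p) V,
      Sys p T K {l | (∀ x ∈ l, x ∈ C) ∧ ∀ x ∈ l, ∀ y ∈ l, dist x y < ε} x := by
  classical
  obtain ⟨x, hx⟩ := exists_sys p T hT K hK
  set F : Finset (List V) := ((Finset.range (K + 1)).biUnion fun k => (x k).support).filter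
    (fun l => (0 : V) ∉ hull l) with hF
  set S : Set (Set V) := hull '' (F : Set (List V)) with hSdef
  have hS : ∀ C ∈ S, Convex ℝ C := by
    rintro _ ⟨l, _, rfl⟩; exact convex_convexHull _ _
  refine ⟨⋃ l ∈ F, hull l, ?_, ?_, ?_⟩
  · refine F.finite_toSet.isCompact_biUnion fun l _ => ?_
    exact (List.finite_toSet l).isCompact_convexHull (𝕜 := ℝ)
  · simp only [Set.mem_iUnion, not_exists]
    intro l hl
    exact (Finset.mem_filter.1 hl).2
  · intro ε hε
    have hcomp : Bornology.IsBounded (⋃ l ∈ F, hull l) :=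
      (F.finite_toSet.isCompact_biUnion fun l _ =>
        (List.finite_toSet l).isCompact_convexHull (𝕜 := ℝ)).isBounded
    set D := Metric.diam (⋃ l ∈ F, hull l) with hDdef
    have hx0 : Sys p T K {l | (∃ C ∈ S, ∀ x ∈ l, x ∈ C) ∧ ∀ x ∈ l, ∀ y ∈ l, dist x y ≤ D} x := by
      refine hx.mono ?_
      intro k hk l hl h0
      have hlF : l ∈ F := by
        simp only [hF, Finset.mem_filter, Finset.mem_biUnion, Finset.mem_range]
        exact ⟨⟨k, by omega, hl⟩, h0⟩
      have hm : ∀ x ∈ l, x ∈ hull l := fun x hx => subset_convexHull ℝ _ hx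
      have hm' : ∀ x ∈ l, x ∈ ⋃ l ∈ F, hull l := fun x hx =>
        Set.mem_biUnion hlF (hm x hx)
      exact ⟨⟨hull l, ⟨l, hlF, rfl⟩, hm⟩,
        fun x hx y hy => Metric.dist_le_diam_of_mem hcomp (hm' x hx) (hm' y hy)⟩
    have hr : ∀ r : ℕ, ∃ x : ℕ → Ch (ZMod p) V, Sys p T K
        {l | (∃ C ∈ S, ∀ x ∈ l, x ∈ C) ∧ ∀ x ∈ l, ∀ y ∈ l,
          dist x y ≤ (1 - ((K + 1 : ℕ) : ℝ)⁻¹) ^ r * D} x := by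
      intro r
      induction r with
      | zero => exact ⟨x, by simpa using hx0⟩
      | succ r ih =>
        obtain ⟨x', hx'⟩ := ih
        have hD' : 0 ≤ (1 - ((K + 1 : ℕ) : ℝ)⁻¹) ^ r * D :=
          mul_nonneg (pow_nonneg (sub_nonneg.2 (inv_le_one_of_one_le₀ (by simp))) _)
            Metric.diam_nonneg
        obtain ⟨x'', hx''⟩ := hx'.shrink hS hD'
        refine ⟨x'', ?_⟩
        rw [pow_succ']
        simpa only [mul_assoc] using hx''
    have hlim : Filter.Tendsto (fun r : ℕ => (1 - ((K + 1 : ℕ) : ℝ)⁻¹) ^ r * D) Filter.atTop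
        (nhds (0 * D)) := by
      refine Filter.Tendsto.mul_const _ (tendsto_pow_atTop_nhds_zero_of_lt_one
        (sub_nonneg.2 (inv_le_one_of_one_le₀ (by simp))) ?_)
      have : (0 : ℝ) < ((K + 1 : ℕ) : ℝ)⁻¹ := by positivity
      linarith
    rw [zero_mul] at hlim
    obtain ⟨r, hrε⟩ := (hlim.eventually (gt_mem_nhds hε)).exists
    obtain ⟨x', hx'⟩ := hr r
    refine ⟨x', hx'.mono ?_⟩
    rintro k hk l - ⟨⟨_, ⟨l0, hl0, rfl⟩, h1⟩, h2⟩
    exact ⟨fun x hx => Set.mem_biUnion hl0 (h1 x hx),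
      fun x hx y hy => (h2 x hx y hy).trans_lt hrε⟩

end geom
end BU

namespace BU
set_option linter.unusedSectionVars false

lemma exists_coord (p : ℕ) [hp : Fact p.Prime] {Y : Type} (τ : Y → Y) (hτ : τ^[p] = id) :
    ∃ a : Y → ZMod p, ∀ y, τ y ≠ y → a (τ y) = a y + 1 := by
  have hmul : ∀ q y, τ^[p * q] y = y := by
    intro q y
    rw [Function.iterate_mul, hτ]; simp
  let S : Setoid Y :=
    { r := fun y z => ∃ j : ℕ, τ^[j] y = z
      iseqv := ⟨fun y => ⟨0, rfl⟩, by
        rintro y z ⟨j, rfl⟩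
        refine ⟨p * j - j, ?_⟩
        rw [← Function.iterate_add_apply, Nat.sub_add_cancel, hmul]
        exact Nat.le_mul_of_pos_left _ hp.out.pos, by
        rintro x y z ⟨j, rfl⟩ ⟨k, rfl⟩
        exact ⟨k + j, by rw [Function.iterate_add_apply]⟩⟩ }
  have hj : ∀ y : Y, ∃ j : ℕ, τ^[j] (Quotient.out (Quotient.mk S y)) = y := fun y =>
    Quotient.mk_out (s := S) y
  choose j hj using hj
  refine ⟨fun y => (j y : ZMod p), fun y hy => ?_⟩
  have hq : Quotient.mk S (τ y) = Quotient.mk S y :=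
    Quotient.sound (s := S) (S.symm ⟨1, rfl⟩)
  have h1 := hj (τ y)
  rw [hq] at h1
  have h2 := hj y
  set r := Quotient.out (Quotient.mk S y) with hr
  have hper : Function.minimalPeriod τ r = p := by
    have hd : Function.minimalPeriod τ r ∣ p :=
      Function.IsPeriodicPt.minimalPeriod_dvd (by
        change τ^[p] r = r
        rw [hτ]; rfl)
    rcases (Nat.dvd_prime hp.out).1 hd with h | h
    · exfalso
      have hfix : τ r = r := Function.minimalPeriod_eq_one_iff_isFixedPt.1 h
      have : y = r := by rw [← h2]; exact Function.iterate_fixed hfix _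
      exact hy (by rw [this]; exact hfix)
    · exact h
  have h3 : τ^[j (τ y)] r = τ^[j y + 1] r := by
    rw [h1, Function.iterate_succ_apply', h2]
  rw [← Function.iterate_mod_minimalPeriod_eq (n := j (τ y)),
    ← Function.iterate_mod_minimalPeriod_eq (n := j y + 1), hper] at h3
  have h4 := (Function.iterate_injOn_Iio_minimalPeriod (f := τ) (x := r))
    (by rw [hper]; exact Nat.mod_lt _ hp.out.pos) (by rw [hper]; exact Nat.mod_lt _ hp.out.pos) h3
  have h5 := (ZMod.natCast_eq_natCast_iff' (j (τ y)) (j y + 1) p).2 h4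
  simpa using h5

section target
variable {W : Type} [NormedAddCommGroup W] [InnerProductSpace ℝ W] [FiniteDimensional ℝ W]

def near (U : Finset W) (s : ℝ) (x : W) : Set W :=
  {u | u ∈ U ∧ ∀ u' ∈ U, inner ℝ x u' ≤ inner ℝ x u + s}

def lft (A : Set W) : Submodule ℝ (W × ℝ) := Submodule.span ℝ ((fun u => (u, (1 : ℝ))) '' A)

lemma lft_mono {A B : Set W} (h : A ⊆ B) : lft A ≤ lft B := Submodule.span_mono (Set.image_mono h)

noncomputable def That (T : W ≃ₗᵢ[ℝ] W) : (W × ℝ) ≃ₗ[ℝ] (W × ℝ) :=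
  T.toLinearEquiv.prodCongr (LinearEquiv.refl ℝ ℝ)

lemma That_apply (T : W ≃ₗᵢ[ℝ] W) (w : W) (r : ℝ) : That T (w, r) = (T w, r) := rfl

lemma lft_image (T : W ≃ₗᵢ[ℝ] W) (A : Set W) :
    lft (T '' A) = (lft A).map (That T).toLinearMap := by
  rw [lft, lft, Submodule.map_span, Set.image_image, Set.image_image]
  rfl

lemma span_bound {E : Type} [AddCommGroup E] [Module ℝ E] (A : Set E) (v : E)
    (hv : v ∈ Submodule.span ℝ A) :
    ∃ C : ℝ, 0 ≤ C ∧ ∀ (φ : E →ₗ[ℝ] ℝ) (s : ℝ), 0 ≤ s → (∀ a ∈ A, |φ a| ≤ s) → |φ v| ≤ C * s := by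
  induction hv using Submodule.span_induction with
  | mem x hx => exact ⟨1, zero_le_one, fun φ s _ h => by simpa using h x hx⟩
  | zero => exact ⟨0, le_rfl, fun φ s _ h => by simp⟩
  | add x y _ _ hx hy =>
    obtain ⟨C, hC, h1⟩ := hx
    obtain ⟨C', hC', h2⟩ := hy
    refine ⟨C + C', by positivity, fun φ s hs h => ?_⟩
    rw [map_add, add_mul]
    exact (abs_add_le _ _).trans (add_le_add (h1 φ s hs h) (h2 φ s hs h))
  | smul a x _ hx =>
    obtain ⟨C, hC, h1⟩ := hx
    refine ⟨|a| * C, by positivity, fun φ s hs h => ?_⟩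
    rw [map_smul, smul_eq_mul, abs_mul, mul_assoc]
    exact mul_le_mul_of_nonneg_left (h1 φ s hs h) (abs_nonneg _)

variable (p : ℕ) [hp : Fact p.Prime] (T : W ≃ₗᵢ[ℝ] W)

lemma orbit_sum (hT : (T : W → W)^[p] = id) (hfix : ∀ v, T v = v → v = 0) (u : W) :
    ∑ j ∈ Finset.range p, (T : W → W)^[j] u = 0 := by
  apply hfix
  rw [map_sum, ← sub_eq_zero, ← Finset.sum_sub_distrib]
  simp only [← Function.iterate_succ_apply' (f := (T : W → W))]
  rw [Finset.sum_range_sub (fun j => (T : W → W)^[j] u), hT]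
  simp

lemma exists_U (hT : (T : W → W)^[p] = id) : ∃ U : Finset W, (∀ u ∈ U, T u ∈ U) ∧
    Submodule.span ℝ (U : Set W) = ⊤ ∧ ∀ u ∈ U, ‖u‖ ≤ 1 := by
  classical
  let b := stdOrthonormalBasis ℝ W
  have hnorm : ∀ j (w : W), ‖(T : W → W)^[j] w‖ = ‖w‖ := by
    intro j w
    induction j with
    | zero => rfl
    | succ j ih => rw [Function.iterate_succ_apply', T.norm_map, ih]
  refine ⟨(Finset.range p ×ˢ Finset.univ).image (fun q => (T : W → W)^[q.1] (b q.2)), ?_, ?_, ?_⟩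
  · intro u hu
    simp only [Finset.mem_image, Finset.mem_product, Finset.mem_range, Finset.mem_univ, and_true,
      Prod.exists] at hu ⊢
    obtain ⟨j, i, hj, rfl⟩ := hu
    rcases lt_or_eq_of_le (Nat.succ_le_of_lt hj) with h | h
    · exact ⟨j + 1, i, h, Function.iterate_succ_apply' _ _ _⟩
    · refine ⟨0, i, hp.out.pos, ?_⟩
      rw [← Function.iterate_succ_apply' (f := (T : W → W)), h, hT]; rfl
  · rw [eq_top_iff, ← b.toBasis.span_eq]
    apply Submodule.span_mono
    rintro _ ⟨i, rfl⟩
    simp only [Finset.coe_image, Set.mem_image]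
    exact ⟨(0, i), by simp [hp.out.pos], by simp⟩
  · intro u hu
    simp only [Finset.mem_image] at hu
    obtain ⟨q, -, rfl⟩ := hu
    rw [hnorm]; simp

variable {p T}

lemma iter_mem {U : Finset W} (hU : ∀ u ∈ U, T u ∈ U) {u : W} (hu : u ∈ U) (j : ℕ) :
    (T : W → W)^[j] u ∈ U := by
  induction j with
  | zero => exact hu
  | succ j ih => rw [Function.iterate_succ_apply']; exact hU _ ih

lemma near_T (hT : (T : W → W)^[p] = id) {U : Finset W} (hU : ∀ u ∈ U, T u ∈ U) (s : ℝ) (x : W) :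
    near U s (T x) = T '' near U s x := by
  have hinv : ∀ u ∈ U, ∃ v ∈ U, T v = u := by
    intro u hu
    refine ⟨(T : W → W)^[p - 1] u, iter_mem hU hu _, ?_⟩
    rw [← Function.iterate_succ_apply' (f := (T : W → W)), Nat.succ_eq_add_one,
      Nat.sub_add_cancel hp.out.one_le, hT]; rfl
  ext u
  constructor
  · rintro ⟨hu, h⟩
    obtain ⟨v, hv, rfl⟩ := hinv u hu
    refine ⟨v, ⟨hv, fun u' hu' => ?_⟩, rfl⟩
    simpa using h (T u') (hU _ hu')
  · rintro ⟨v, ⟨hv, h⟩, rfl⟩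
    refine ⟨hU v hv, fun u' hu' => ?_⟩
    obtain ⟨v', hv', rfl⟩ := hinv u' hu'
    simpa using h v' hv'

lemma exists_pos (hT : (T : W → W)^[p] = id) (hfix : ∀ v, T v = v → v = 0) {U : Finset W}
    (hU : ∀ u ∈ U, T u ∈ U) (hspan : Submodule.span ℝ (U : Set W) = ⊤) (x : W) (hx : x ≠ 0) :
    ∃ u ∈ U, 0 < inner ℝ x u := by
  by_contra! hcon
  apply hx
  have h0 : ∀ u ∈ U, inner ℝ x u = 0 := by
    intro u hu
    have h1 : ∑ j ∈ Finset.range p, inner ℝ x ((T : W → W)^[j] u) = 0 := by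
      rw [← inner_sum, orbit_sum p T hT hfix, inner_zero_right]
    have h2 := (Finset.sum_eq_zero_iff_of_nonpos (fun j _ => hcon _ (iter_mem hU hu j))).1 h1 0
      (Finset.mem_range.2 hp.out.pos)
    simpa using h2
  have h1 : ∀ w : W, inner ℝ x w = 0 := by
    intro w
    have hw : w ∈ Submodule.span ℝ (U : Set W) := by rw [hspan]; trivial
    induction hw using Submodule.span_induction with
    | mem u hu => exact h0 u hu
    | zero => simp
    | add a b _ _ ha hb => rw [inner_add_right, ha, hb, add_zero]
    | smul c a _ ha => rw [inner_smul_right, ha, mul_zero]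
  exact inner_self_eq_zero.1 (h1 x)

lemma exists_pos_unif (hT : (T : W → W)^[p] = id) (hfix : ∀ v, T v = v → v = 0) {U : Finset W}
    (hU : ∀ u ∈ U, T u ∈ U) (hspan : Submodule.span ℝ (U : Set W) = ⊤) :
    ∃ c > 0, ∀ x ∈ sphere (0 : W) 1, ∃ u ∈ U, c ≤ inner ℝ x u := by
  rcases (sphere (0 : W) 1).eq_empty_or_nonempty with he | ⟨x0, hx0⟩
  · exact ⟨1, one_pos, by simp [he]⟩
  have hne : ∀ x ∈ sphere (0 : W) 1, x ≠ 0 := fun x hx => ne_zero_of_mem_unit_sphere ⟨x, hx⟩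
  obtain ⟨u0, hu0, -⟩ := exists_pos hT hfix hU hspan x0 (hne x0 hx0)
  have hUne : U.Nonempty := ⟨u0, hu0⟩
  have hcont : ContinuousOn (fun x : W => U.sup' hUne (fun u => inner ℝ x u)) (sphere 0 1) := by
    refine ContinuousOn.finset_sup'_apply hUne fun u _ => ?_
    fun_prop
  obtain ⟨y, hy, hmin⟩ := (isCompact_sphere (0 : W) 1).exists_isMinOn ⟨x0, hx0⟩ hcont
  refine ⟨U.sup' hUne (fun u => inner ℝ y u), ?_, fun x hx => ?_⟩
  · obtain ⟨u, hu, h⟩ := exists_pos hT hfix hU hspan y (hne y hy)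
    exact h.trans_le (Finset.le_sup' (fun u => inner ℝ y u) hu)
  · obtain ⟨u, hu, h⟩ := Finset.exists_mem_eq_sup' hUne (fun u => inner ℝ x u)
    exact ⟨u, hu, by rw [← h]; exact hmin hx⟩

lemma near_zero_nonempty {U : Finset W} (hne : U.Nonempty) (x : W) : (near U 0 x).Nonempty := by
  obtain ⟨u, hu, h⟩ := U.exists_max_image (fun u => inner ℝ x u) hne
  exact ⟨u, hu, by simpa using h⟩

lemma near_mono (U : Finset W) {s s' : ℝ} (h : s ≤ s') (x : W) : near U s x ⊆ near U s' x :=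
  fun _ hu => ⟨hu.1, fun u' hu' => (hu.2 u' hu').trans (by gcongr)⟩

lemma near_close {U : Finset W} (hn : ∀ u ∈ U, ‖u‖ ≤ 1) {s η : ℝ} {x y : W}
    (h : dist x y ≤ η / 2) : near U s x ⊆ near U (s + η) y := by
  rintro u ⟨hu, h1⟩
  refine ⟨hu, fun u' hu' => ?_⟩
  have key : ∀ v ∈ U, |inner ℝ x v - inner ℝ y v| ≤ η / 2 := by
    intro v hv
    rw [← inner_sub_left]
    calc |inner ℝ (x - y) v| ≤ ‖x - y‖ * ‖v‖ := abs_real_inner_le_norm _ _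
      _ ≤ ‖x - y‖ * 1 := by gcongr; exact hn v hv
      _ ≤ η / 2 := by rwa [mul_one, ← dist_eq_norm]
  have a1 := abs_le.1 (key u hu)
  have a2 := abs_le.1 (key u' hu')
  have := h1 u' hu'
  linarith [a1.1, a1.2, a2.1, a2.2]

lemma exists_eta (hT : (T : W → W)^[p] = id) (hfix : ∀ v, T v = v → v = 0) {U : Finset W}
    (hU : ∀ u ∈ U, T u ∈ U) (hspan : Submodule.span ℝ (U : Set W) = ⊤) :
    ∃ η > 0, ∀ x ∈ sphere (0 : W) 1, ∀ s, 0 ≤ s → s ≤ η →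
      ((0 : W), (1 : ℝ)) ∉ lft (near U s x) := by
  classical
  obtain ⟨c, hc, hcx⟩ := exists_pos_unif hT hfix hU hspan
  have hS : ∀ S : Finset W, ∃ C : ℝ, 0 ≤ C ∧ (((0 : W), (1 : ℝ)) ∈ lft (S : Set W) →
      ∀ (φ : (W × ℝ) →ₗ[ℝ] ℝ) (s : ℝ), 0 ≤ s → (∀ a ∈ (fun u => (u, (1 : ℝ))) '' (S : Set W),
        |φ a| ≤ s) → |φ (0, 1)| ≤ C * s) := by
    intro S
    by_cases h : ((0 : W), (1 : ℝ)) ∈ lft (S : Set W)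
    · obtain ⟨C, hC, h'⟩ := span_bound _ _ h
      exact ⟨C, hC, fun _ => h'⟩
    · exact ⟨0, le_rfl, fun h' => absurd h' h⟩
  choose C hC0 hC using hS
  set D := ∑ S ∈ U.powerset, C S with hD
  have hD0 : 0 ≤ D := Finset.sum_nonneg fun S _ => hC0 S
  refine ⟨c / (2 * (D + 1)), by positivity, fun x hx s hs0 hs hmem => ?_⟩
  obtain ⟨u1, hu1, hcu⟩ := hcx x hx
  obtain ⟨u0, hu0, hmax⟩ := U.exists_max_image (fun u => inner ℝ x u) ⟨u1, hu1⟩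
  set S := U.filter (fun u => u ∈ near U s x) with hSdef
  have hScoe : (S : Set W) = near U s x := by
    ext u
    simp only [hSdef, Finset.coe_filter, Set.mem_ofPred_eq]
    exact ⟨fun h => h.2, fun h => ⟨h.1, h⟩⟩
  let φ : (W × ℝ) →ₗ[ℝ] ℝ :=
    (innerₛₗ ℝ x) ∘ₗ LinearMap.fst ℝ W ℝ - (inner ℝ x u0 : ℝ) • LinearMap.snd ℝ W ℝ
  have hφ : ∀ w r, φ (w, r) = inner ℝ x w - inner ℝ x u0 * r := by intro w r; simp [φ]
  rw [← hScoe] at hmem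
  have hb := hC S hmem φ s hs0 (by
    rintro _ ⟨u, hu, rfl⟩
    rw [hScoe] at hu
    rw [hφ, abs_le]
    have h1 := hu.2 u0 hu0
    have h2 := hmax u hu.1
    constructor <;> linarith)
  have hCD : C S ≤ D := Finset.single_le_sum (fun S _ => hC0 S)
    (Finset.mem_powerset.2 (Finset.filter_subset _ _))
  rw [hφ, inner_zero_right, zero_sub, mul_one, abs_neg] at hb
  have h1 : c ≤ |inner ℝ x u0| := (hcu.trans (hmax u1 hu1)).trans (le_abs_self _)
  have h2 : C S * s ≤ D * (c / (2 * (D + 1))) := by gcongr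
  have h3 : D * (c / (2 * (D + 1))) < c := by
    rw [mul_div_assoc', div_lt_iff₀ (by positivity)]
    nlinarith
  linarith

lemma That_ne (hT : (T : W → W)^[p] = id) (hfix : ∀ v, T v = v → v = 0) {A : Set W}
    (hne : A.Nonempty) (h : ((0 : W), (1 : ℝ)) ∉ lft A) :
    (lft A).map (That T).toLinearMap ≠ lft A := by
  intro heq
  apply h
  obtain ⟨u, hu⟩ := hne
  have hj : ∀ j : ℕ, (((T : W → W)^[j] u), (1 : ℝ)) ∈ lft A := by
    intro j
    induction j with
    | zero => exact Submodule.subset_span ⟨u, hu, rfl⟩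
    | succ j ih =>
      rw [Function.iterate_succ_apply', ← heq]
      exact ⟨_, ih, rfl⟩
  have hs : ((0 : W), (p : ℝ)) ∈ lft A := by
    have := Submodule.sum_mem (lft A) (t := Finset.range p) (fun j _ => hj j)
    have e : ∑ j ∈ Finset.range p, (((T : W → W)^[j] u), (1 : ℝ)) = ((0 : W), (p : ℝ)) := by
      ext
      · rw [Prod.fst_sum]; exact orbit_sum p T hT hfix u
      · rw [Prod.snd_sum]; simp
    rwa [e] at this
  have := Submodule.smul_mem _ ((p : ℝ)⁻¹) hs
  have hp0 : (p : ℝ) ≠ 0 := by exact_mod_cast hp.out.ne_zero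
  simpa [hp0] using this

lemma exists_label (hT : (T : W → W)^[p] = id) (hfix : ∀ v, T v = v → v = 0) (m : ℕ)
    (hm : Module.finrank ℝ W = m + 1) :
    ∃ (i : W → ℕ) (a : W → ZMod p), ∃ δ > 0, ∀ x ∈ sphere (0 : W) 1,
      (1 ≤ i x ∧ i x ≤ m + 1) ∧ i (T x) = i x ∧ a (T x) = a x + 1 ∧
      ∀ y ∈ sphere (0 : W) 1, dist x y < δ → i x = i y → a x = a y := by
  obtain ⟨U, hU, hspan, hn⟩ := exists_U p T hT
  obtain ⟨η0, hη0, hη⟩ := exists_eta hT hfix hU hspan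
  have hWn : Nontrivial W := Module.finrank_pos_iff.1 (by omega : 0 < Module.finrank ℝ W)
  have hUne : U.Nonempty := by
    obtain ⟨v, hv⟩ := exists_ne (0 : W)
    obtain ⟨u, hu, -⟩ := exists_pos hT hfix hU hspan v hv
    exact ⟨u, hu⟩
  have hThat : (fun L : Submodule ℝ (W × ℝ) => L.map (That T).toLinearMap)^[p] = id := by
    have : ∀ j (L : Submodule ℝ (W × ℝ)),
        ((fun L : Submodule ℝ (W × ℝ) => L.map (That T).toLinearMap)^[j] L : Set (W × ℝ)) =
        (fun q : W × ℝ => ((T : W → W)^[j] q.1, q.2)) '' L := by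
      intro j L
      induction j with
      | zero => simp
      | succ j ih =>
        rw [Function.iterate_succ_apply', Submodule.map_coe, ih, Set.image_image]
        simp only [Function.iterate_succ_apply']
        rfl
    ext1 L
    apply SetLike.coe_injective
    rw [this, hT]
    simp
  obtain ⟨co, hco⟩ := exists_coord p _ hThat
  set η := η0 / (m + 1) with hηdef
  have hηpos : 0 < η := by positivity
  let L : ℕ → W → Submodule ℝ (W × ℝ) := fun k x => lft (near U (k * η) x)
  have hLT : ∀ k x, L k (T x) = (L k x).map (That T).toLinearMap := by
    intro k x
    simp only [L]
    rw [near_T hT hU, lft_image]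
  let r : ℕ → W → ℕ := fun k x => Module.finrank ℝ (L k x)
  have hrT : ∀ k x, r k (T x) = r k x := by
    intro k x
    change Module.finrank ℝ (L k (T x)) = Module.finrank ℝ (L k x)
    rw [hLT]
    exact LinearEquiv.finrank_map_eq (That T) _
  let i : W → ℕ := fun x => sInf {k | 1 ≤ k ∧ r k x ≤ k}
  have h01 : ∀ x ∈ sphere (0 : W) 1, ∀ k ≤ m + 1, ((0 : W), (1 : ℝ)) ∉ L k x := by
    intro x hx k hk
    refine hη x hx _ (by positivity) ?_
    have : (k : ℝ) ≤ m + 1 := by exact_mod_cast hk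
    calc (k : ℝ) * η ≤ (m + 1) * η := by gcongr
      _ = η0 := by rw [hηdef]; field_simp
  have htop : ∀ x ∈ sphere (0 : W) 1, m + 1 ∈ {k | 1 ≤ k ∧ r k x ≤ k} := by
    intro x hx
    refine ⟨by omega, ?_⟩
    have hlt : L (m + 1) x < ⊤ := by
      rw [lt_top_iff_ne_top]
      intro h
      exact h01 x hx (m + 1) le_rfl (by rw [h]; trivial)
    have := Submodule.finrank_lt_finrank_of_lt hlt
    rw [finrank_top, Module.finrank_prod, hm, Module.finrank_self] at this
    change Module.finrank ℝ (L (m + 1) x) ≤ m + 1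
    omega
  have hle : ∀ x ∈ sphere (0 : W) 1, i x ≤ m + 1 := fun x hx => Nat.sInf_le (htop x hx)
  have hmem : ∀ x ∈ sphere (0 : W) 1, 1 ≤ i x ∧ r (i x) x ≤ i x := fun x hx =>
    Nat.sInf_mem (s := {k | 1 ≤ k ∧ r k x ≤ k}) ⟨_, htop x hx⟩
  have hnear : ∀ k x, (near U ((k : ℕ) * η) x).Nonempty := fun k x =>
    (near_zero_nonempty hUne x).mono (near_mono U (by positivity) x)
  have hprev : ∀ x ∈ sphere (0 : W) 1, i x ≤ r (i x - 1) x := by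
    intro x hx
    have h1 := (hmem x hx).1
    rcases Nat.eq_or_lt_of_le h1 with h | h
    · rw [← h]
      apply Submodule.one_le_finrank_iff.2
      intro hbot
      obtain ⟨u, hu⟩ := hnear (1 - 1) x
      have : (u, (1 : ℝ)) ∈ L (1 - 1) x := Submodule.subset_span ⟨u, hu, rfl⟩
      rw [hbot, Submodule.mem_bot] at this
      simpa using congrArg Prod.snd this
    · have hlt : i x - 1 < i x := by omega
      have := Nat.notMem_of_lt_sInf (s := {k | 1 ≤ k ∧ r k x ≤ k}) hlt
      simp only [Set.mem_ofPred_eq, not_and, not_le] at this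
      have := this (by omega)
      omega
  have hkey : ∀ x ∈ sphere (0 : W) 1, ∀ y ∈ sphere (0 : W) 1, dist x y < η / 2 → i x = i y →
      L (i x - 1) x = L (i y) y := by
    intro x hx y hy hd hi
    have hsub : L (i x - 1) x ≤ L (i y) y := by
      apply lft_mono
      have := near_close (s := ((i x - 1 : ℕ) : ℝ) * η) hn hd.le
      have e : ((i x - 1 : ℕ) : ℝ) * η + η = (i y : ℝ) * η := by
        rw [← hi, Nat.cast_sub (hmem x hx).1]; push_cast; ring
      rwa [e] at this
    refine Submodule.eq_of_le_of_finrank_le hsub ?_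
    exact ((hmem y hy).2.trans hi.ge).trans (hprev x hx)
  refine ⟨i, fun x => co (L (i x) x), η / 2, by positivity, fun x hx => ?_⟩
  have hiT : i (T x) = i x := by simp only [i, hrT]
  refine ⟨⟨(hmem x hx).1, hle x hx⟩, hiT, ?_, ?_⟩
  · simp only [hiT, hLT]
    exact hco _ (That_ne hT hfix (hnear _ x) (h01 x hx _ (hle x hx)))
  · intro y hy hd hi
    have h1 := hkey x hx y hy hd hi
    have h2 := hkey x hx x hx (by simpa using (by positivity : 0 < η / 2)) rfl
    simp only [← h1, ← h2]

end target
end BU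

namespace BU

/-- A vertex of maximal label in a list. -/
def pick {p : ℕ} : List (ℕ × ZMod p) → ℕ × ZMod p
  | [] => (0, 0)
  | [q] => q
  | q :: q' :: l => if (pick (q' :: l)).1 ≤ q.1 then q else pick (q' :: l)

lemma pick_cons {p : ℕ} (q : ℕ × ZMod p) (l : List (ℕ × ZMod p)) (hl : l ≠ []) :
    pick (q :: l) = if (pick l).1 ≤ q.1 then q else pick l := by
  cases l with
  | nil => exact absurd rfl hl
  | cons q' l => rw [pick]

lemma pick_mem {p : ℕ} (l : List (ℕ × ZMod p)) (hl : l ≠ []) : pick l ∈ l := by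
  induction l with
  | nil => exact absurd rfl hl
  | cons q l ih =>
    by_cases h : l = []
    · subst h; simp [pick]
    · rw [pick_cons q l h]
      split_ifs
      · simp
      · exact List.mem_cons_of_mem _ (ih h)

lemma le_pick {p : ℕ} (l : List (ℕ × ZMod p)) : ∀ q ∈ l, q.1 ≤ (pick l).1 := by
  induction l with
  | nil => simp
  | cons q l ih =>
    by_cases h : l = []
    · subst h; simp [pick]
    · intro q' hq'
      rw [pick_cons q l h]
      rcases List.mem_cons.1 hq' with rfl | hq'
      · split_ifs with h1
        · exact le_rfl
        · omega
      · have := ih q' hq'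
        split_ifs with h1
        · omega
        · exact this

lemma pick_map {p : ℕ} (l : List (ℕ × ZMod p)) (hl : l ≠ []) :
    pick (l.map (fun q => (q.1, q.2 + 1))) = ((pick l).1, (pick l).2 + 1) := by
  induction l with
  | nil => exact absurd rfl hl
  | cons q l ih =>
    by_cases h : l = []
    · subst h; simp [pick]
    · rw [List.map_cons, pick_cons q l h, pick_cons _ _ (by simpa using h), ih h]
      split_ifs <;> simp_all

lemma deg_of_labels {p : ℕ} (L : List (ℕ × ZMod p)) : ∀ N : ℕ,
    (∀ q ∈ L, 1 ≤ q.1 ∧ q.1 ≤ N) → N < L.length → L.Pairwise (fun a b : ℕ × ZMod p => b.1 ≤ a.1) →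
    (∀ q ∈ L, ∀ q' ∈ L, q.1 = q'.1 → q.2 = q'.2) → Deg (L.map Prod.snd) := by
  induction L with
  | nil => intro N _ h; simp at h
  | cons q L ih =>
    intro N hN hlen hp hc
    cases L with
    | nil =>
      have := hN q (by simp)
      simp at hlen; omega
    | cons q' L =>
      by_cases h : q.1 = q'.1
      · have := hc q (by simp) q' (by simp) h
        rw [List.map_cons, List.map_cons, this]
        exact Deg.here _ _
      · rw [List.map_cons]
        apply Deg.cons
        rw [List.pairwise_cons] at hp
        have hq := hN q (by simp)
        have hqq := hp.1 q' (by simp)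
        refine ih (N - 1) ?_ ?_ hp.2 (fun a ha b hb => hc a (List.mem_cons_of_mem _ ha) b (List.mem_cons_of_mem _ hb))
        · intro r hr
          refine ⟨(hN r (List.mem_cons_of_mem _ hr)).1, ?_⟩
          have : r.1 ≤ q'.1 := by
            rcases List.mem_cons.1 hr with rfl | hr
            · exact le_rfl
            · exact (List.pairwise_cons.1 hp.2).1 r hr
          omega
        · simp at hlen ⊢; omega

lemma main {V W : Type} [NormedAddCommGroup V] [InnerProductSpace ℝ V] [FiniteDimensional ℝ V]
    [NormedAddCommGroup W] [InnerProductSpace ℝ W] [FiniteDimensional ℝ W]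
    (p : ℕ) [Fact p.Prime] (T₁ : V ≃ₗᵢ[ℝ] V) (T₂ : W ≃ₗᵢ[ℝ] W)
    (h₁ : (T₁ : V → V)^[p] = id) (h₂ : (T₂ : W → W)^[p] = id) (hfix : ∀ v, T₂ v = v → v = 0)
    (m : ℕ) (hm : Module.finrank ℝ W = m + 1) (hn : m + 1 < Module.finrank ℝ V)
    (f : V → W) (hf : ContinuousOn f (sphere 0 1)) (hfs : ∀ x ∈ sphere (0 : V) 1, f x ∈ sphere (0 : W) 1)
    (hfe : ∀ x ∈ sphere (0 : V) 1, f (T₁ x) = T₂ (f x)) : False := by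
  obtain ⟨i, a, δ, hδ, hia⟩ := exists_label h₂ hfix m hm
  obtain ⟨C, hC, hC0, hx⟩ := exists_small_sys p (T₁.toLinearEquiv : V →ₗ[ℝ] V) h₁ (m + 1) hn
  let F : V → W := fun v => f (‖v‖⁻¹ • v)
  have hs : ∀ v : V, v ≠ 0 → ‖v‖⁻¹ • v ∈ sphere (0 : V) 1 := by
    intro v hv
    have : ‖v‖ ≠ 0 := norm_ne_zero_iff.2 hv
    rw [mem_sphere_zero_iff_norm, norm_smul, norm_inv, norm_norm, inv_mul_cancel₀ this]
  have hFs : ∀ v : V, v ≠ 0 → F v ∈ sphere (0 : W) 1 := fun v hv => hfs _ (hs v hv)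
  have hFe : ∀ v : V, v ≠ 0 → F (T₁ v) = T₂ (F v) := by
    intro v hv
    simp only [F]
    rw [T₁.norm_map, ← hfe _ (hs v hv), map_smul]
  have hFc : ContinuousOn F C := by
    refine hf.comp (t := sphere (0 : V) 1) ?_ ?_
    · intro v hv
      have : ‖v‖ ≠ 0 := norm_ne_zero_iff.2 (fun h => hC0 (h ▸ hv))
      exact ((continuousAt_id.norm.inv₀ this).smul continuousAt_id).continuousWithinAt
    · intro v hv
      exact hs v (fun h => hC0 (h ▸ hv))
  have hFu := hC.uniformContinuousOn_of_continuous hFc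
  rw [Metric.uniformContinuousOn_iff] at hFu
  obtain ⟨ε, hε, hFε⟩ := hFu δ hδ
  obtain ⟨x, hx⟩ := hx ε hε
  have s1 : Sys p (T₁.toLinearEquiv : V →ₗ[ℝ] V) (m + 1)
      {l | (∀ x ∈ l, x ≠ 0) ∧ ∀ x ∈ l, ∀ y ∈ l, dist (F x) (F y) < δ} x := by
    refine hx.mono ?_
    rintro k hk l - ⟨hl, hl'⟩
    exact ⟨fun x hx h => hC0 (h ▸ hl x hx),
      fun x hx y hy => hFε x (hl x hx) y (hl y hy) (hl' x hx y hy)⟩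
  have s2 := s1.push (fun q : ℕ × ZMod p => (q.1, q.2 + 1)) (fun v => (i (F v), a (F v)))
    {l | (∀ q ∈ l, 1 ≤ q.1 ∧ q.1 ≤ m + 1) ∧ ∀ q ∈ l, ∀ q' ∈ l, q.1 = q'.1 → q.2 = q'.2}
    (by
      rintro l ⟨hl, hl'⟩
      refine ⟨?_, ?_⟩
      · intro x hx
        obtain ⟨v, hv, rfl⟩ := List.mem_map.1 hx
        exact fun h => hl v hv (T₁.map_eq_zero_iff.1 h)
      · intro x hx y hy
        obtain ⟨v, hv, rfl⟩ := List.mem_map.1 hx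
        obtain ⟨w, hw, rfl⟩ := List.mem_map.1 hy
        change dist (F (T₁ v)) (F (T₁ w)) < δ
        rw [hFe v (hl v hv), hFe w (hl w hw), T₂.dist_map]
        exact hl' v hv w hw)
    (by
      rintro l ⟨hl, hl'⟩ v hv
      have := hia _ (hFs v (hl v hv))
      change (i (F (T₁ v)), a (F (T₁ v))) = _
      rw [hFe v (hl v hv), this.2.1, this.2.2.1])
    (by
      rintro l ⟨hl, hl'⟩
      refine ⟨?_, ?_⟩
      · intro x hx
        obtain ⟨v, hv, rfl⟩ := List.mem_map.1 hx
        exact (hia _ (hFs v (hl v hv))).1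
      · intro x hx y hy
        obtain ⟨v, hv, rfl⟩ := List.mem_map.1 hx
        obtain ⟨w, hw, rfl⟩ := List.mem_map.1 hy
        exact (hia _ (hFs v (hl v hv))).2.2.2 _ (hFs w (hl w hw)) (hl' v hv w hw))
  have s3 := s2.sd (fun q : ℕ × ZMod p => (q.1, q.2 + 1)) pick (fun l hl => pick_map l hl)
    (fun l L => (∀ q ∈ L, q ∈ l) ∧ L.Pairwise (fun a b : ℕ × ZMod p => b.1 ≤ a.1)) (by simp)
    (by
      rintro l l' L hsub hlen ⟨hL, hL'⟩
      have hne : l ≠ [] := by rintro rfl; simp at hlen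
      refine ⟨?_, ?_⟩
      · intro q hq
        rcases List.mem_cons.1 hq with rfl | hq
        · exact pick_mem l hne
        · exact hsub.subset (hL q hq)
      · exact List.pairwise_cons.2 ⟨fun q hq => le_pick l q (hsub.subset (hL q hq)), hL'⟩)
    {L | (∀ q ∈ L, 1 ≤ q.1 ∧ q.1 ≤ m + 1) ∧ (∀ q ∈ L, ∀ q' ∈ L, q.1 = q'.1 → q.2 = q'.2) ∧
      L.Pairwise (fun a b : ℕ × ZMod p => b.1 ≤ a.1)}
    (by
      rintro l ⟨hl, hl'⟩ L - ⟨hL, hL'⟩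
      exact ⟨fun q hq => hl q (hL q hq), fun q hq q' hq' => hl' q (hL q hq) q' (hL q' hq'), hL'⟩)
  have s4 := s3.push (fun a : ZMod p => a + 1) Prod.snd
    {l | ∃ L : List (ℕ × ZMod p), ((∀ q ∈ L, 1 ≤ q.1 ∧ q.1 ≤ m + 1) ∧
      (∀ q ∈ L, ∀ q' ∈ L, q.1 = q'.1 → q.2 = q'.2) ∧
      L.Pairwise (fun a b : ℕ × ZMod p => b.1 ≤ a.1)) ∧ l = L.map Prod.snd}
    (by
      rintro l ⟨hl, hl', hl''⟩
      refine ⟨?_, ?_, ?_⟩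
      · intro q hq
        obtain ⟨v, hv, rfl⟩ := List.mem_map.1 hq
        exact hl v hv
      · intro q hq q' hq' h
        obtain ⟨v, hv, rfl⟩ := List.mem_map.1 hq
        obtain ⟨w, hw, rfl⟩ := List.mem_map.1 hq'
        have := hl' v hv w hw h
        simp only [this]
      · rw [List.pairwise_map]
        exact hl'')
    (fun _ _ _ _ => rfl)
    (fun l hl => ⟨l, hl, rfl⟩)
  refine no_sys p (m + 1) _ _ s4 ?_
  rintro _ ⟨L, ⟨hL, hL', hL''⟩, rfl⟩ hlen
  refine deg_of_labels L (m + 1) hL ?_ hL'' hL'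
  simp at hlen
  omega

end BU
/-- Borsuk–Ulam for `ℤ_p` actions: if a prime `p` acts freely by linear
isometries on spheres `Sⁿ` and `Sᵐ` with `n > m`, there is no `ℤ_p`-equivariant
continuous map from `Sⁿ` to `Sᵐ`. -/
theorem borsukUlam_zmod_p {p n m : ℕ} (hp : p.Prime) (h : m < n)
    (ρ₁ : Multiplicative (ZMod p) →*
      (EuclideanSpace ℝ (Fin (n + 1)) ≃ₗᵢ[ℝ] EuclideanSpace ℝ (Fin (n + 1))))
    (ρ₂ : Multiplicative (ZMod p) →*
      (EuclideanSpace ℝ (Fin (m + 1)) ≃ₗᵢ[ℝ] EuclideanSpace ℝ (Fin (m + 1))))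
    (hfree₁ : ∀ g : Multiplicative (ZMod p), g ≠ 1 →
      ∀ v : EuclideanSpace ℝ (Fin (n + 1)), v ≠ 0 → ρ₁ g v ≠ v)
    (hfree₂ : ∀ g : Multiplicative (ZMod p), g ≠ 1 →
      ∀ v : EuclideanSpace ℝ (Fin (m + 1)), v ≠ 0 → ρ₂ g v ≠ v) :
    ¬ ∃ f : EuclideanSpace ℝ (Fin (n + 1)) → EuclideanSpace ℝ (Fin (m + 1)),
      ContinuousOn f (sphere (0 : EuclideanSpace ℝ (Fin (n + 1))) 1) ∧
      (∀ x ∈ sphere (0 : EuclideanSpace ℝ (Fin (n + 1))) 1,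
        f x ∈ sphere (0 : EuclideanSpace ℝ (Fin (m + 1))) 1) ∧
      (∀ g : Multiplicative (ZMod p), ∀ x ∈ sphere (0 : EuclideanSpace ℝ (Fin (n + 1))) 1,
        f (ρ₁ g x) = ρ₂ g (f x)) := by
  rintro ⟨f, hf, hfs, hfe⟩
  haveI : Fact p.Prime := ⟨hp⟩
  have hiter : ∀ (d : ℕ) (ρ : Multiplicative (ZMod p) →*
      (EuclideanSpace ℝ (Fin d) ≃ₗᵢ[ℝ] EuclideanSpace ℝ (Fin d))),
      ((ρ (Multiplicative.ofAdd 1) : EuclideanSpace ℝ (Fin d) → EuclideanSpace ℝ (Fin d)))^[p]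
        = id := by
    intro d ρ
    have key : ∀ j : ℕ, ∀ v, (ρ (Multiplicative.ofAdd 1))^[j] v
        = ρ (Multiplicative.ofAdd 1 ^ j) v := by
      intro j
      induction j with
      | zero => intro v; simp
      | succ j ih =>
        intro v
        rw [Function.iterate_succ_apply', ih, pow_succ', map_mul]; rfl
    funext v
    rw [key, ← ofAdd_nsmul]
    simp
  have hne : Multiplicative.ofAdd (1 : ZMod p) ≠ 1 := by
    intro h0
    exact one_ne_zero (α := ZMod p) (Multiplicative.ofAdd.injective h0)
  refine BU.main p (ρ₁ (Multiplicative.ofAdd 1)) (ρ₂ (Multiplicative.ofAdd 1)) (hiter _ _)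
    (hiter _ _) ?_ m (by simp) (by simp; omega) f hf hfs (fun x hx => hfe _ x hx)
  intro v hv
  by_contra h0
  exact hfree₂ _ hne v h0 hv
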